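/- For any Λ ≥ 1, d > 0 and C₀ > 0 there exists a constant C = C(Λ,d,C₀) such that the following holds for every x̄ ∈ S² and every r̄ ∈ (0,π/2]. Let ρ_{x̄,r̄} be the conformal factor of the Möbius transformation given by the dilation centred at x̄ which maps B_{r̄}(x̄) onto a hemisphere. Then for every x ∈ B_{Λr̄}(x̄), every r ∈ (d·r̄, r̄], and every C¹ function φ : S² → ℝ with support contained in B_r(x) and ‖dφ‖_{L^∞(S²,g_{S²})} ≤ C₀·r⁻¹, one has ‖dφ‖_{L^∞(S², ρ_{x̄,r̄}²g_{S²})} = sup_{S²} ρ_{x̄,r̄}⁻¹·|dφ|_{g_{S²}} ≤ C. -/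

import Mathlib

open MeasureTheory Metric Real Set Filter
open scoped RealInnerProductSpace

noncomputable section

abbrev E3 : Type := EuclideanSpace ℝ (Fin 3)

/-- The unit sphere `S² ⊂ ℝ³`. -/
def S2 : Set E3 := Metric.sphere (0 : E3) 1

/-- Surface measure on `S²`: 2-dimensional Hausdorff measure restricted to the sphere. -/
def sphVol : Measure E3 := (μH[2] : Measure E3).restrict S2

/-- The 0-homogeneous extension of a map defined on the sphere. -/
def homExt (u : E3 → E3) : E3 → E3 := fun y => u (‖y‖⁻¹ • y)

def e3 (i : Fin 3) : E3 := EuclideanSpace.single i (1 : ℝ)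

/-- Energy density `|∇u|²` of `u|_{S²}` at `x ∈ S²` (squared Hilbert-Schmidt norm of the
differential, computed via the 0-homogeneous extension). -/
def enDensity (u : E3 → E3) (x : E3) : ℝ :=
  ∑ i, ‖fderiv ℝ (homExt u) x (e3 i)‖ ^ 2

/-- Dirichlet energy `E(u,Ω) = (1/2)∫_Ω |∇u|²`. -/
def energyOn (u : E3 → E3) (Ω : Set E3) : ℝ :=
  (1 / 2) * ∫ x in Ω, enDensity u x ∂sphVol

def energy (u : E3 → E3) : ℝ := energyOn u S2

def det3 (a b c : E3) : ℝ :=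
  a 0 * (b 1 * c 2 - b 2 * c 1) - a 1 * (b 0 * c 2 - b 2 * c 0)
    + a 2 * (b 0 * c 1 - b 1 * c 0)

/-- The signed Jacobian of a sphere map. -/
def jacobian (u : E3 → E3) (x : E3) : ℝ :=
  (1 / 2) * ∑ i, ∑ j, det3 x (e3 i) (e3 j) *
      det3 (u x) (fderiv ℝ (homExt u) x (e3 i)) (fderiv ℝ (homExt u) x (e3 j))

/-- The (Brouwer) degree, `deg u = (1/4π) ∫ Jac(u)`. -/
def sphDeg (u : E3 → E3) : ℝ := (4 * π)⁻¹ * ∫ x, jacobian u x ∂sphVol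

/-- The energy defect `δ_u = E(u) - 4π|deg u|`. -/
def defect (u : E3 → E3) : ℝ := energy u - 4 * π * |sphDeg u|

def IsSphereMap (u : E3 → E3) : Prop :=
  ContDiff ℝ (⊤ : ℕ∞) u ∧ ∀ x ∈ S2, u x ∈ S2

/-- Laplace-Beltrami operator of the round sphere applied to `u`. -/
def sphLap (u : E3 → E3) (x : E3) : E3 :=
  ∑ i, fderiv ℝ (fun y => fderiv ℝ (homExt u) y (e3 i)) x (e3 i)

/-- Tension field `τ(u) = Δu + |∇u|² u`. -/
def tension (u : E3 → E3) (x : E3) : E3 :=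
  sphLap u x + enDensity u x • u x

/-- Harmonic (= rational, up to orientation) maps of the round sphere. -/
def IsHarmonicSphereMap (u : E3 → E3) : Prop :=
  IsSphereMap u ∧ ∀ x ∈ S2, tension u x = 0

/-- Geodesic distance on `S²`. -/
def gdist (x y : E3) : ℝ := Real.arccos ⟪x, y⟫

/-- Geodesic ball in `S²`. -/
def gBall (x : E3) (r : ℝ) : Set E3 := {y ∈ S2 | gdist x y < r}

/-- Oscillation of `u` over `U`. -/
def oscOn (u : E3 → E3) (U : Set E3) : ℝ := ⨆ x ∈ U, ⨆ y ∈ U, ‖u x - u y‖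

/-- The Möbius dilation of the sphere with centre `p` and dilation factor `μ`. -/
def mobius (p : E3) (μ : ℝ) (y : E3) : E3 :=
  ((1 + ⟪y, p⟫) + μ ^ 2 * (1 - ⟪y, p⟫))⁻¹ •
    (((1 + ⟪y, p⟫) - μ ^ 2 * (1 - ⟪y, p⟫)) • p + (2 * μ) • (y - ⟪y, p⟫ • p))

/-- The Möbius dilation `M_{p,r}` centred at `p` scaling `B_r(p)` to a hemisphere. -/
def mobiusDil (p : E3) (r : ℝ) : E3 → E3 := mobius p (Real.tan (r / 2))⁻¹

/-- `ρ_{p,r}² = (1/2)|∇M_{p,r}|²`, the conformal factor squared of `M_{p,r}`. -/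
def confSq (p : E3) (r : ℝ) (x : E3) : ℝ := (1 / 2) * enDensity (mobiusDil p r) x

/-- Möbius transformations (conformal diffeomorphisms) of the round sphere:
compositions of an isometry with a Möbius dilation. -/
def IsMobiusTransform (M : E3 → E3) : Prop :=
  ∃ (R : E3 ≃ₗᵢ[ℝ] E3) (p : E3) (μ : ℝ),
    p ∈ S2 ∧ 0 < μ ∧ ∀ x ∈ S2, M x = R (mobius p μ x)

/-- A set obtained from a geodesic ball by removing a finite collection of smaller balls. -/
def IsBallMinusBalls (Ω : Set E3) : Prop :=
  ∃ (c : E3) (R : ℝ) (m : ℕ) (cs : Fin m → E3) (rs : Fin m → ℝ),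
    c ∈ S2 ∧ 0 < R ∧ (∀ j, cs j ∈ S2 ∧ rs j < R) ∧
    Ω = gBall c R \ ⋃ j, gBall (cs j) (rs j)

/-- `|dφ|²` on the sphere, for a scalar function `φ`, computed via the 0-homogeneous
extension of `φ`. -/
def enDensityR (φ : E3 → ℝ) (x : E3) : ℝ :=
  ∑ i, (fderiv ℝ (fun y => φ (‖y‖⁻¹ • y)) x (e3 i)) ^ 2

/-!
In Minkowski space `ℝ³ ⊕ ℝ` the Möbius dilation `M` is the projectivization of a Lorentz boost:
writing `M y = N(y) / D(y)`, one has `⟪N(y), N(z)⟫ - D(y) D(z) = 4 μ² (⟪y, z⟫ - 1)`. On the sphere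
this becomes the chord formula `‖M y - M z‖² = 4 μ² ‖y - z‖² / (D(y) D(z))`, so `M` is conformal
with factor `2 μ / D`. In terms of the geodesic distance `θ` to the centre `p`,
`ρ_{p,r}⁻¹ = cos² (θ / 2) tan (r / 2) + sin² (θ / 2) / tan (r / 2) ≤ r + θ² / (2 r)`,
which is `O(r)` on balls of radius `O(r)`. This compensates the factor `r⁻¹` in the bound on `dφ`
at points of the support of `φ`; off the support `dφ` vanishes.
-/

open scoped Topology

section Calculus

theorem norm_sq_apply_eq_of_norm_sub_sq_eventuallyEq {𝕜 E F G : Type*} [NontriviallyNormedField 𝕜]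
    [NormedAddCommGroup E] [NormedSpace 𝕜 E] [NormedAddCommGroup F] [NormedSpace 𝕜 F]
    [NormedAddCommGroup G] [NormedSpace 𝕜 G] {f : E → F} {g : E → G} {f' : E →L[𝕜] F}
    {g' : E →L[𝕜] G} {c : E → ℝ} {x : E} (hf : HasFDerivAt f f' x) (hg : HasFDerivAt g g' x)
    (hc : ContinuousAt c x) (hfg : ∀ᶠ z in 𝓝 x, ‖f z - f x‖ ^ 2 = c z * ‖g z - g x‖ ^ 2) (h : E) :
    ‖f' h‖ ^ 2 = c x * ‖g' h‖ ^ 2 := by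
  have hline : Tendsto (fun t : 𝕜 => x + t • h) (𝓝[≠] 0) (𝓝 x) := by
    have hcont : Continuous fun t : 𝕜 => x + t • h := by fun_prop
    simpa using (hcont.tendsto 0).mono_left nhdsWithin_le_nhds
  have hf_quot := ((hf.hasLineDerivAt h).tendsto_slope_zero.norm).pow 2
  have hg_quot := (hc.tendsto.comp hline).mul
    (((hg.hasLineDerivAt h).tendsto_slope_zero.norm).pow 2)
  refine tendsto_nhds_unique_of_eventuallyEq hf_quot hg_quot ?_
  filter_upwards [hline.eventually hfg] with t ht
  simp only [norm_smul, mul_pow, Function.comp_apply, ht]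
  ring

theorem hasFDerivAt_normalize {V : Type*} [NormedAddCommGroup V] [InnerProductSpace ℝ V] {x : V}
    (hx : x ≠ 0) :
    HasFDerivAt NormedSpace.normalize (‖x‖⁻¹ • (ℝ ∙ x)ᗮ.starProjection) x := by
  have hnorm : ‖x‖ ≠ 0 := norm_ne_zero_iff.2 hx
  have hnorm_inv : HasFDerivAt (fun z : V => ‖z‖⁻¹) (-(‖x‖ ^ 3)⁻¹ • innerSL ℝ x) x := by
    have hsq : HasFDerivAt (fun z : V => ‖z‖ ^ 2) (2 • innerSL ℝ x) x :=
      (hasStrictFDerivAt_norm_sq x).hasFDerivAt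
    have hinv := (hasDerivAt_inv (by positivity)).comp_hasFDerivAt x (hsq.sqrt (by positivity))
    simp only [Real.sqrt_sq (norm_nonneg _), Function.comp_def] at hinv
    refine hinv.congr_fderiv ?_
    ext v
    simp only [one_div, mul_inv_rev, neg_smul, neg_apply, smul_apply, coe_innerSL_apply,
      nsmul_eq_mul, Nat.cast_ofNat, smul_eq_mul, neg_inj]
    field_simp
  refine (hnorm_inv.smul (hasFDerivAt_id x)).congr_fderiv ?_
  ext v
  simp only [neg_smul, id_eq, add_apply, smul_apply, ContinuousLinearMap.id_apply,
    ContinuousLinearMap.smulRight_apply, neg_apply, coe_innerSL_apply, smul_eq_mul,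
    Submodule.starProjection_orthogonal', sub_apply, one_apply_eq_self,
    Submodule.starProjection_singleton, ringHom_apply]
  match_scalars <;> field_simp

theorem sum_norm_starProjection_sq {𝕜 V ι : Type*} [RCLike 𝕜] [NormedAddCommGroup V]
    [InnerProductSpace 𝕜 V] [Fintype ι] (b : OrthonormalBasis ι 𝕜 V) (K : Submodule 𝕜 V)
    [K.HasOrthogonalProjection] :
    ∑ i, ‖K.starProjection (b i)‖ ^ 2 = Module.finrank 𝕜 K := by
  have : FiniteDimensional 𝕜 V := b.toBasis.finiteDimensional_of_finite
  have hproj : LinearMap.IsProj K (K.starProjection : V →ₗ[𝕜] V) :=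
    ⟨K.starProjection_apply_mem, fun _ => Submodule.starProjection_eq_self_iff.2⟩
  have htrace := congrArg RCLike.re (hproj.trace.symm.trans (LinearMap.trace_eq_sum_inner _ b))
  rw [RCLike.natCast_re, map_sum] at htrace
  rw [htrace]
  refine Finset.sum_congr rfl fun i _ => ?_
  rw [K.starProjection_apply, ← Submodule.coe_norm, ← K.re_inner_starProjection_eq_normSq (b i),
    inner_re_symm]
  rfl

theorem tan_le_two_mul {a : ℝ} (ha₀ : 0 ≤ a) (ha : a ≤ π / 3) : Real.tan a ≤ 2 * a := by
  have hcos : 1 / 2 ≤ Real.cos a := by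
    rw [← Real.cos_pi_div_three]
    exact Real.cos_le_cos_of_nonneg_of_le_pi ha₀ (by linarith [Real.pi_pos]) ha
  rw [Real.tan_eq_sin_div_cos, div_le_iff₀ (by linarith)]
  nlinarith [Real.sin_le ha₀]

end Calculus

section Sphere

theorem mem_S2_iff {y : E3} : y ∈ S2 ↔ ‖y‖ = 1 := mem_sphere_zero_iff_norm

theorem ne_zero_of_mem_S2 {y : E3} (hy : y ∈ S2) : y ≠ 0 := ne_zero_of_mem_unit_sphere ⟨y, hy⟩

theorem normalize_eq_self_of_mem_S2 {y : E3} (hy : y ∈ S2) : NormedSpace.normalize y = y :=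
  NormedSpace.normalize_eq_self_of_norm_eq_one (mem_S2_iff.1 hy)

theorem tendsto_normalize_nhdsWithin_S2 {y : E3} (hy : y ∈ S2) :
    Tendsto NormedSpace.normalize (𝓝 y) (𝓝[S2] y) := by
  have hy₀ := ne_zero_of_mem_S2 hy
  refine tendsto_nhdsWithin_iff.2 ⟨?_, ?_⟩
  · simpa only [normalize_eq_self_of_mem_S2 hy] using
      (hasFDerivAt_normalize hy₀).continuousAt.tendsto
  · filter_upwards [isOpen_ne.mem_nhds hy₀] with z hz
    exact mem_S2_iff.2 (NormedSpace.norm_normalize_eq_one_iff.2 hz)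

theorem differentiableAt_homExt {u : E3 → E3} {y : E3} (hy : y ∈ S2)
    (hu : DifferentiableAt ℝ u y) : DifferentiableAt ℝ (homExt u) y := by
  rw [← normalize_eq_self_of_mem_S2 hy] at hu
  exact hu.comp y (hasFDerivAt_normalize (ne_zero_of_mem_S2 hy)).differentiableAt

theorem sum_norm_starProjection_orthogonal_e3_sq {y : E3} (hy : y ≠ 0) :
    ∑ i, ‖(ℝ ∙ y)ᗮ.starProjection (e3 i)‖ ^ 2 = 2 := by
  have : Fact (Module.finrank ℝ E3 = 2 + 1) := ⟨finrank_euclideanSpace_fin⟩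
  have hsum := sum_norm_starProjection_sq (EuclideanSpace.basisFun (Fin 3) ℝ) (ℝ ∙ y)ᗮ
  simpa only [e3, EuclideanSpace.basisFun_apply,
    Submodule.finrank_orthogonal_span_singleton (n := 2) hy, Nat.cast_ofNat] using hsum

theorem enDensity_eq_two_mul_of_norm_sub_sq {u : E3 → E3} {c : E3 → ℝ} {y : E3} (hy : y ∈ S2)
    (hu : DifferentiableAt ℝ u y) (hc : ContinuousWithinAt c S2 y)
    (hchord : ∀ z ∈ S2, ‖u z - u y‖ ^ 2 = c z * ‖z - y‖ ^ 2) : enDensity u y = 2 * c y := by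
  have hself := normalize_eq_self_of_mem_S2 hy
  have hproj : HasFDerivAt NormedSpace.normalize (ℝ ∙ y)ᗮ.starProjection y := by
    simpa only [mem_S2_iff.1 hy, inv_one, one_smul] using
      hasFDerivAt_normalize (ne_zero_of_mem_S2 hy)
  have htendsto := tendsto_normalize_nhdsWithin_S2 hy
  have hc_normalize : ContinuousAt (c ∘ NormedSpace.normalize) y := by
    simpa only [ContinuousAt, Function.comp_apply, hself] using hc.tendsto.comp htendsto
  have hext : ∀ᶠ z in 𝓝 y, ‖homExt u z - homExt u y‖ ^ 2 =
      (c ∘ NormedSpace.normalize) z * ‖NormedSpace.normalize z - NormedSpace.normalize y‖ ^ 2 := by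
    filter_upwards [htendsto.eventually self_mem_nhdsWithin] with z hz
    change ‖u (NormedSpace.normalize z) - u (NormedSpace.normalize y)‖ ^ 2 = _
    rw [hself]
    exact hchord _ hz
  have hnorm (h : E3) :
      ‖fderiv ℝ (homExt u) y h‖ ^ 2 = c y * ‖(ℝ ∙ y)ᗮ.starProjection h‖ ^ 2 := by
    simpa only [Function.comp_apply, hself] using norm_sq_apply_eq_of_norm_sub_sq_eventuallyEq
      (differentiableAt_homExt hy hu).hasFDerivAt hproj hc_normalize hext h
  simp only [enDensity, hnorm, ← Finset.mul_sum,
    sum_norm_starProjection_orthogonal_e3_sq (ne_zero_of_mem_S2 hy), mul_comm]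

theorem enDensityR_eq_zero_of_eventuallyEq {φ : E3 → ℝ} {y : E3} (hy : y ∈ S2)
    (hφ : φ =ᶠ[𝓝[S2] y] 0) : enDensityR φ y = 0 := by
  have hext : (fun z => φ (‖z‖⁻¹ • z)) =ᶠ[𝓝 y] 0 :=
    (tendsto_normalize_nhdsWithin_S2 hy).eventually hφ
  simp [enDensityR, hext.fderiv_eq]

end Sphere

section GeodesicDistance

theorem gdist_eq_angle {x y : E3} (hx : x ∈ S2) (hy : y ∈ S2) :
    gdist x y = InnerProductGeometry.angle x y := by
  simp only [gdist, InnerProductGeometry.angle, mem_S2_iff.1 hx, mem_S2_iff.1 hy, mul_one, div_one]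

theorem gdist_triangle {x y z : E3} (hx : x ∈ S2) (hy : y ∈ S2) (hz : z ∈ S2) :
    gdist x z ≤ gdist x y + gdist y z := by
  rw [gdist_eq_angle hx hz, gdist_eq_angle hx hy, gdist_eq_angle hy hz]
  exact InnerProductGeometry.angle_le_angle_add_angle x y z

theorem gdist_nonneg (x y : E3) : 0 ≤ gdist x y := Real.arccos_nonneg _

theorem cos_gdist {x y : E3} (hx : x ∈ S2) (hy : y ∈ S2) : Real.cos (gdist x y) = ⟪x, y⟫ := by
  rw [gdist_eq_angle hx hy, InnerProductGeometry.cos_angle, mem_S2_iff.1 hx, mem_S2_iff.1 hy,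
    mul_one, div_one]

theorem continuous_gdist (x : E3) : Continuous (gdist x) :=
  Real.continuous_arccos.comp (by fun_prop)

theorem gdist_le_of_enDensityR_ne_zero {φ : E3 → ℝ} {x y : E3} {r : ℝ} (hy : y ∈ S2)
    (hsupp : ∀ z ∈ S2, z ∉ gBall x r → φ z = 0) (hφ : enDensityR φ y ≠ 0) : gdist x y ≤ r := by
  contrapose! hφ
  have hfar : ∀ᶠ z in 𝓝[S2] y, r < gdist x z :=
    (continuous_gdist x).continuousWithinAt.eventually (lt_mem_nhds hφ)
  refine enDensityR_eq_zero_of_eventuallyEq hy ?_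
  filter_upwards [self_mem_nhdsWithin, hfar] with z hz hrz
  exact hsupp z hz fun hball => hball.2.not_gt hrz

end GeodesicDistance

section Mobius

/-- The numerator `N(y)` of the Möbius dilation. The pair of `N(y)` and `mobiusDenom p μ y` is the
image of `(y, 1) ∈ ℝ³ ⊕ ℝ` under `2 μ` times a Lorentz boost. -/
def mobiusNum (p : E3) (μ : ℝ) (y : E3) : E3 :=
  ((1 + ⟪y, p⟫) - μ ^ 2 * (1 - ⟪y, p⟫)) • p + (2 * μ) • (y - ⟪y, p⟫ • p)

/-- The denominator `D(y)` of the Möbius dilation: on the sphere, the dilation is conformal with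
factor `2 μ / D(y)`. -/
def mobiusDenom (p : E3) (μ : ℝ) (y : E3) : ℝ := (1 + ⟪y, p⟫) + μ ^ 2 * (1 - ⟪y, p⟫)

theorem mobius_eq_smul (p : E3) (μ : ℝ) (y : E3) :
    mobius p μ y = (mobiusDenom p μ y)⁻¹ • mobiusNum p μ y := rfl

theorem inner_mobiusNum_mobiusNum {p : E3} (hp : p ∈ S2) (μ : ℝ) (y z : E3) :
    ⟪mobiusNum p μ y, mobiusNum p μ z⟫ =
      mobiusDenom p μ y * mobiusDenom p μ z + 4 * μ ^ 2 * (⟪y, z⟫ - 1) := by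
  have hpp : ⟪p, p⟫ = 1 := by rw [real_inner_self_eq_norm_sq, mem_S2_iff.1 hp, one_pow]
  simp only [mobiusNum, mobiusDenom, inner_add_left, inner_add_right, inner_sub_left,
    inner_sub_right, real_inner_smul_left, real_inner_smul_right, hpp, real_inner_comm _ p]
  ring

theorem mobiusDenom_pos {p y : E3} (hp : p ∈ S2) (hy : y ∈ S2) {μ : ℝ} (hμ : μ ≠ 0) :
    0 < mobiusDenom p μ y := by
  have habs : |⟪y, p⟫| ≤ 1 := by
    simpa [mem_S2_iff.1 hy, mem_S2_iff.1 hp] using abs_real_inner_le_norm y p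
  obtain ⟨hlower, hupper⟩ := abs_le.1 habs
  unfold mobiusDenom
  obtain hlt | heq := hupper.lt_or_eq
  · have : 0 < μ ^ 2 * (1 - ⟪y, p⟫) := mul_pos (by positivity) (by linarith)
    linarith
  · rw [heq]
    norm_num

theorem inner_mobius_mobius {p y z : E3} (hp : p ∈ S2) (hy : y ∈ S2) (hz : z ∈ S2) {μ : ℝ}
    (hμ : μ ≠ 0) :
    ⟪mobius p μ y, mobius p μ z⟫ =
      1 + 4 * μ ^ 2 / (mobiusDenom p μ y * mobiusDenom p μ z) * (⟪y, z⟫ - 1) := by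
  have hDy := (mobiusDenom_pos hp hy hμ).ne'
  have hDz := (mobiusDenom_pos hp hz hμ).ne'
  rw [mobius_eq_smul, mobius_eq_smul, real_inner_smul_left, real_inner_smul_right,
    inner_mobiusNum_mobiusNum hp]
  field_simp

theorem norm_mobius_sub_mobius_sq {p y z : E3} (hp : p ∈ S2) (hy : y ∈ S2) (hz : z ∈ S2) {μ : ℝ}
    (hμ : μ ≠ 0) :
    ‖mobius p μ y - mobius p μ z‖ ^ 2 =
      4 * μ ^ 2 / (mobiusDenom p μ y * mobiusDenom p μ z) * ‖y - z‖ ^ 2 := by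
  have hself {w : E3} (hw : w ∈ S2) : ⟪w, w⟫ = 1 := by
    rw [real_inner_self_eq_norm_sq, mem_S2_iff.1 hw, one_pow]
  have hself_mobius {w : E3} (hw : w ∈ S2) : ⟪mobius p μ w, mobius p μ w⟫ = 1 := by
    rw [inner_mobius_mobius hp hw hw hμ, hself hw, sub_self, mul_zero, add_zero]
  rw [← real_inner_self_eq_norm_sq, ← real_inner_self_eq_norm_sq, real_inner_sub_sub_self,
    real_inner_sub_sub_self, hself hy, hself hz, hself_mobius hy, hself_mobius hz,
    inner_mobius_mobius hp hy hz hμ]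
  ring

theorem continuous_mobiusDenom (p : E3) (μ : ℝ) : Continuous (mobiusDenom p μ) := by
  unfold mobiusDenom
  fun_prop

theorem differentiableAt_mobius {p y : E3} {μ : ℝ} (hy : mobiusDenom p μ y ≠ 0) :
    DifferentiableAt ℝ (mobius p μ) y := by
  have hinner : DifferentiableAt ℝ (fun z : E3 => ⟪z, p⟫) y :=
    differentiableAt_id.inner ℝ (differentiableAt_const p)
  have hdenom : DifferentiableAt ℝ (mobiusDenom p μ) y := by unfold mobiusDenom; fun_prop
  have hnum : DifferentiableAt ℝ (mobiusNum p μ) y := by unfold mobiusNum; fun_prop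
  exact (hdenom.inv hy).smul hnum

theorem enDensity_mobius {p y : E3} (hp : p ∈ S2) (hy : y ∈ S2) {μ : ℝ} (hμ : μ ≠ 0) :
    enDensity (mobius p μ) y = 2 * (2 * μ / mobiusDenom p μ y) ^ 2 := by
  have hD := (mobiusDenom_pos hp hy hμ).ne'
  have hcont : ContinuousAt
      (fun z => 4 * μ ^ 2 / (mobiusDenom p μ z * mobiusDenom p μ y)) y :=
    continuousAt_const.div ((continuous_mobiusDenom p μ).continuousAt.mul continuousAt_const)
      (mul_ne_zero hD hD)
  rw [enDensity_eq_two_mul_of_norm_sub_sq hy (differentiableAt_mobius hD) hcont.continuousWithinAt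
    fun z hz => norm_mobius_sub_mobius_sq hp hz hy hμ]
  ring

theorem sqrt_confSq {p y : E3} (hp : p ∈ S2) (hy : y ∈ S2) {r : ℝ} (hr : 0 < Real.tan (r / 2)) :
    √(confSq p r y) =
      2 * (Real.tan (r / 2))⁻¹ / mobiusDenom p (Real.tan (r / 2))⁻¹ y := by
  have hμ : 0 < (Real.tan (r / 2))⁻¹ := inv_pos.2 hr
  have hD := mobiusDenom_pos hp hy hμ.ne'
  rw [confSq, mobiusDil, enDensity_mobius hp hy hμ.ne', ← mul_assoc, one_div_mul_cancel two_ne_zero,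
    one_mul, Real.sqrt_sq (by positivity)]

theorem inv_sqrt_confSq {p y : E3} (hp : p ∈ S2) (hy : y ∈ S2) {r : ℝ}
    (hr : 0 < Real.tan (r / 2)) :
    (√(confSq p r y))⁻¹ = Real.cos (gdist p y / 2) ^ 2 * Real.tan (r / 2) +
      Real.sin (gdist p y / 2) ^ 2 / Real.tan (r / 2) := by
  have hinner : ⟪y, p⟫ = Real.cos (gdist p y) := by rw [cos_gdist hp hy, real_inner_comm]
  rw [sqrt_confSq hp hy hr, mobiusDenom, hinner, Real.cos_sq, Real.sin_sq_eq_half_sub,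
    mul_div_cancel₀ _ two_ne_zero]
  field_simp

theorem inv_sqrt_confSq_le {p y : E3} (hp : p ∈ S2) (hy : y ∈ S2) {r : ℝ} (hr₀ : 0 < r)
    (hr : r ≤ 2 * π / 3) : (√(confSq p r y))⁻¹ ≤ r + gdist p y ^ 2 / (2 * r) := by
  have hle_tan : r / 2 ≤ Real.tan (r / 2) :=
    Real.le_tan (by linarith) (by linarith [Real.pi_pos])
  have htan_le : Real.tan (r / 2) ≤ r := by
    linarith [tan_le_two_mul (a := r / 2) (by linarith) (by linarith)]
  have htan_pos : 0 < Real.tan (r / 2) := by linarith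
  have hsin : Real.sin (gdist p y / 2) ^ 2 ≤ (gdist p y / 2) ^ 2 := Real.sin_sq_le_sq
  have hcos : Real.cos (gdist p y / 2) ^ 2 ≤ 1 := Real.cos_sq_le_one _
  calc (√(confSq p r y))⁻¹
      = Real.cos (gdist p y / 2) ^ 2 * Real.tan (r / 2) +
          Real.sin (gdist p y / 2) ^ 2 / Real.tan (r / 2) := inv_sqrt_confSq hp hy htan_pos
    _ ≤ 1 * r + (gdist p y / 2) ^ 2 / (r / 2) := by gcongr
    _ = r + gdist p y ^ 2 / (2 * r) := by ring

theorem inv_sqrt_confSq_le_of_gdist_le {p y : E3} (hp : p ∈ S2) (hy : y ∈ S2) {r : ℝ}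
    (hr₀ : 0 < r) (hr : r ≤ 2 * π / 3) {K : ℝ} (hdist : gdist p y ≤ K * r) :
    (√(confSq p r y))⁻¹ ≤ (1 + K ^ 2 / 2) * r := by
  have hdist_sq : gdist p y ^ 2 ≤ (K * r) ^ 2 := pow_le_pow_left₀ (gdist_nonneg p y) hdist 2
  calc (√(confSq p r y))⁻¹ ≤ r + gdist p y ^ 2 / (2 * r) := inv_sqrt_confSq_le hp hy hr₀ hr
    _ ≤ r + (K * r) ^ 2 / (2 * r) := by gcongr
    _ = (1 + K ^ 2 / 2) * r := by field_simp

end Mobius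

theorem statement6_general (Λ : ℝ) {d C₀ rb r : ℝ} (hd : 0 < d) {xb x y : E3} (hxb : xb ∈ S2)
    (hrb : rb ∈ Set.Ioc 0 (π / 2)) (hx : x ∈ gBall xb (Λ * rb)) (hr : r ∈ Set.Ioc (d * rb) rb)
    {φ : E3 → ℝ} (_hφ : DifferentiableAt ℝ φ y) (hsupp : ∀ z ∈ S2, z ∉ gBall x r → φ z = 0)
    (hy : y ∈ S2) (hbound : √(enDensityR φ y) ≤ C₀ / r) :
    (√(confSq xb rb y))⁻¹ * √(enDensityR φ y) ≤ (1 + (Λ + 1) ^ 2 / 2) * (C₀ / d) := by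
  obtain ⟨hrb₀, hrb_le⟩ := hrb
  have hdrb : 0 < d * rb := mul_pos hd hrb₀
  have hr₀ : 0 < r := hdrb.trans hr.1
  have hC₀ : 0 ≤ C₀ := by
    simpa [div_mul_cancel₀ _ hr₀.ne'] using mul_nonneg ((Real.sqrt_nonneg _).trans hbound) hr₀.le
  by_cases hzero : enDensityR φ y = 0
  · rw [hzero, Real.sqrt_zero, mul_zero]
    positivity
  have hdist : gdist xb y ≤ (Λ + 1) * rb := by
    linarith [gdist_triangle hxb hx.1 hy, hx.2, hr.2,
      gdist_le_of_enDensityR_ne_zero hy hsupp hzero]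
  have hconf : (√(confSq xb rb y))⁻¹ ≤ (1 + (Λ + 1) ^ 2 / 2) * rb :=
    inv_sqrt_confSq_le_of_gdist_le hxb hy hrb₀ (by linarith [Real.pi_pos]) hdist
  have hgrad : √(enDensityR φ y) ≤ C₀ / (d * rb) :=
    hbound.trans (div_le_div_of_nonneg_left hC₀ hdrb hr.1.le)
  calc (√(confSq xb rb y))⁻¹ * √(enDensityR φ y)
      ≤ ((1 + (Λ + 1) ^ 2 / 2) * rb) * (C₀ / (d * rb)) := by gcongr
    _ = (1 + (Λ + 1) ^ 2 / 2) * (C₀ / d) := by field_simp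

/-- Lemma 2.2 / `lemma:cut offs`: cut-off functions on balls
`B_r(x) ⊆ B_{Λrb}(xb)` with `r ∈ (d rb, rb]` have uniformly bounded differential with respect
to the weighted metric `ρ_{xb,rb}² g_{S²}`. -/
theorem statement6 (Λ : ℝ) (hΛ : 1 ≤ Λ) (d : ℝ) (hd : 0 < d) (C₀ : ℝ) (hC₀ : 0 < C₀) :
    ∃ C : ℝ, 0 < C ∧
      ∀ (xb : E3) (rb : ℝ), xb ∈ S2 → rb ∈ Set.Ioc 0 (π / 2) →
      ∀ x ∈ gBall xb (Λ * rb), ∀ r ∈ Set.Ioc (d * rb) rb,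
      ∀ φ : E3 → ℝ, ContDiff ℝ 1 φ →
        (∀ y ∈ S2, y ∉ gBall x r → φ y = 0) →
        (∀ y ∈ S2, Real.sqrt (enDensityR φ y) ≤ C₀ / r) →
        ∀ y ∈ S2, (Real.sqrt (confSq xb rb y))⁻¹ * Real.sqrt (enDensityR φ y) ≤ C := by
  exact ⟨(1 + (Λ + 1) ^ 2 / 2) * (C₀ / d), by positivity,
    fun _ _ hxb hrb _ hx _ hr _ hφ hsupp hbound y hy => statement6_general Λ hd hxb hrb hx hr
      (hφ.differentiable one_ne_zero y) hsupp hy (hbound y hy)⟩
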